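/- Let n ≥ 2, let G be the complete directed graph on n nodes with unitary travel times (including self-loops), let π = (1/n)𝟙_n, and let P = (a − b) I_n + b 𝟙_n 𝟙_n^T for reals a ≥ 0 and b > 0 with a + (n−1)b = 1. Then P is row-stochastic with stationary distribution π, and its return time entropy equals J(P) = −a log a − (n−1) b log( (n−1) b² ) − (n−1)(1−b) log(1−b). -/

import Mathlib

open scoped BigOperators
open Real

/-- First hitting time probabilities for unitary travel times:
`F_1 = P` and `F_k(i,j) = Σ_{h≠j} p_{ih} F_{k−1}(h,j)` for `k ≥ 2`. -/
def IsHittingProbUnit {n : ℕ} (P : Matrix (Fin n) (Fin n) ℝ)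
    (F : ℕ → Fin n → Fin n → ℝ) : Prop :=
  (∀ i j, F 1 i j = P i j) ∧
    ∀ k : ℕ, 2 ≤ k → ∀ i j,
      F k i j = ∑ h : Fin n, if h = j then 0 else P i h * F (k - 1) h j

/-- on the complete graph on `n ≥ 2` nodes with unitary travel
times, the chain `P = (a − b)I_n + b𝟙𝟙ᵀ` with `a ≥ 0`, `b > 0`,
`a + (n−1)b = 1` is row-stochastic with uniform stationary distribution
`π = (1/n)𝟙`, and its return time entropy equals
`−a log a − (n−1) b log((n−1)b²) − (n−1)(1−b) log(1−b)`. -/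
theorem complete_graph_special_structure_entropy {n : ℕ} (hn : 2 ≤ n)
    (a b : ℝ) (ha : 0 ≤ a) (hb : 0 < b) (hab : a + ((n : ℝ) - 1) * b = 1)
    (P : Matrix (Fin n) (Fin n) ℝ)
    (hP : ∀ i j, P i j = (if i = j then a - b else 0) + b)
    (F : ℕ → Fin n → Fin n → ℝ) (hF : IsHittingProbUnit P F) :
    (∀ i, ∑ j, P i j = 1) ∧
    (∀ j, ∑ i, (1 / (n : ℝ)) * P i j = 1 / (n : ℝ)) ∧
    (∑ i : Fin n, (1 / (n : ℝ)) * ∑' k : ℕ, Real.negMulLog (F (k + 1) i i)) =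
      -a * Real.log a - ((n : ℝ) - 1) * b * Real.log (((n : ℝ) - 1) * b ^ 2) -
        ((n : ℝ) - 1) * (1 - b) * Real.log (1 - b) := by
  have hn' : (2:ℝ) ≤ n := by exact_mod_cast hn
  have hn0 : (n:ℝ) ≠ 0 := by linarith
  have hb1 : b ≤ 1 := by nlinarith
  have hrow : ∀ i, ∑ j, P i j = 1 := by
    intro i
    simp only [hP, Finset.sum_add_distrib, Finset.sum_ite_eq, Finset.mem_univ, if_true,
      Finset.sum_const, Finset.card_univ, Fintype.card_fin, nsmul_eq_mul]
    linarith
  have hcol : ∀ j, ∑ i, P i j = 1 := by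
    intro j
    simp only [hP, Finset.sum_add_distrib, Finset.sum_ite_eq', Finset.mem_univ, if_true,
      Finset.sum_const, Finset.card_univ, Fintype.card_fin, nsmul_eq_mul]
    linarith
  have hsum : ∀ i j, (∑ h : Fin n, if h = j then 0 else P i h) = 1 - P i j := by
    intro i j
    rw [← hrow i, eq_sub_iff_add_eq]
    have : P i j = ∑ h : Fin n, if h = j then P i h else 0 := by simp
    rw [this, ← Finset.sum_add_distrib]
    refine Finset.sum_congr rfl fun h _ => ?_
    split_ifs <;> simp
  obtain ⟨hF1, hF2⟩ := hF
  have hstep : ∀ k : ℕ, ∀ c : ℝ, (∀ i j, i ≠ j → F (k+1) i j = c) →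
      ∀ i j, F (k+2) i j = (1 - P i j) * c := by
    intro k c hc i j
    rw [hF2 (k+2) (by omega), ← hsum i j, Finset.sum_mul]
    refine Finset.sum_congr rfl fun h _ => ?_
    split_ifs with hh
    · simp
    · rw [show k + 2 - 1 = k + 1 from rfl, hc h j hh]
  have hoff : ∀ k : ℕ, ∀ i j, i ≠ j → F (k+1) i j = b * (1-b)^k := by
    intro k
    induction k with
    | zero => intro i j hij; simp [hF1, hP, hij]
    | succ k ih =>
      intro i j hij
      rw [hstep k _ ih i j, hP, if_neg hij]
      ring
  have hdiag : ∀ k : ℕ, ∀ i, F (k+2) i i = (((n:ℝ)-1) * b^2) * (1-b)^k := by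
    intro k i
    rw [hstep k _ (hoff k) i i, hP, if_pos rfl]
    have : 1 - (a - b + b) = ((n:ℝ)-1)*b := by linarith
    rw [this]; ring
  have hr : ‖1 - b‖ < 1 := by
    rw [Real.norm_eq_abs, abs_lt]; constructor <;> linarith
  have hent : ∀ i, HasSum (fun k : ℕ => Real.negMulLog (F (k + 1) i i))
      (-a * Real.log a - ((n : ℝ) - 1) * b * Real.log (((n : ℝ) - 1) * b ^ 2) -
        ((n : ℝ) - 1) * (1 - b) * Real.log (1 - b)) := by
    intro i
    rw [← hasSum_nat_add_iff' 1]
    have h1 := (hasSum_geometric_of_norm_lt_one hr).mul_left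
      (Real.negMulLog (((n : ℝ) - 1) * b ^ 2))
    have h2 := (hasSum_coe_mul_geometric_of_norm_lt_one hr).mul_left
      (-(((n : ℝ) - 1) * b ^ 2) * Real.log (1 - b))
    convert h1.add h2 using 1
    · rfl
    · funext k
      rw [show k + 1 + 1 = k + 2 from rfl, hdiag, Real.negMulLog_mul]
      simp only [Real.negMulLog, Real.log_pow]
      ring
    · simp only [Finset.sum_range_one, zero_add, hF1, hP, if_true, Real.negMulLog]
      rw [show a - b + b = a by ring, show 1 - (1 - b) = b by ring]
      field_simp
      ring
  refine ⟨hrow, ?_, ?_⟩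
  · intro j
    rw [← Finset.mul_sum, hcol, mul_one]
  · simp only [fun i => (hent i).tsum_eq, Finset.sum_const, Finset.card_univ, Fintype.card_fin,
      nsmul_eq_mul]
    field_simp
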